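/- Let d ≥ 2, L > 0 and δ > 0. Then there exists a constant C = C(d, L, δ) > 0 such that for every L-Lipschitz function g : 𝕋^{d−1} → ℝ with osc_{𝕋^{d−1}} g ≥ δ and every ε ∈ (0,1), one has ∫_{𝕋^{d−1}} [ √(1 + |∇g(x′)|²) − √(1 + (1−ε)² |∇g(x′)|²) ] dx′ ≥ C ε, where ∇g denotes the almost-everywhere defined gradient of g. (In other words, the Euclidean perimeter of periodic Lipschitz subgraphs satisfies assumption (H).) -/

import Mathlib

open MeasureTheory Filter Set
open scoped ENNReal

noncomputable section

/-- Euclidean space `ℝ^m`. -/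
abbrev Rm (m : ℕ) : Type := EuclideanSpace ℝ (Fin m)

/-- The fundamental cube `[0,1)^m`. -/
def cube (m : ℕ) : Set (Rm m) := {x | ∀ i, x i ∈ Set.Ico (0:ℝ) 1}

open Submodule ZSpan
open scoped NNReal Pointwise

/-!
Let `D` be a fundamental domain of the period lattice and `T = ∫_D ‖∇g‖`. By periodicity the
integral of `‖∇g‖` over any translate of `D` is `T`, so for every `s ⊆ D` the average of `g` over
`x + s` is a `T / μ(s)`-Lipschitz function of `x`. On the translates of a small copy `s = r • D` the
Lipschitz function `g` is almost constant, so its oscillation survives the averaging; this bounds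
`T` from below. Pointwise, the perimeter gain is at least `ε ‖∇g‖² / (2 √(1 + L²))`, and Jensen's
inequality bounds the integral of `‖∇g‖²` below by `T² / μ(D)`.
-/

section Periodic

theorem periodic_of_mem_span_int {V α : Type*} [AddCommGroup V] {f : V → α} {S : Set V}
    (hf : ∀ c ∈ S, Function.Periodic f c) {v : V} (hv : v ∈ span ℤ S) :
    Function.Periodic f v := by
  induction hv using span_induction with
  | mem c hc => exact hf c hc
  | zero => exact Function.periodic_with_period_zero f
  | add v w _ _ hv hw => exact hv.add_period hw
  | smul n v _ hv => exact hv.zsmul n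

theorem periodic_fderiv {𝕜 V F : Type*} [NontriviallyNormedField 𝕜] [NormedAddCommGroup V]
    [NormedSpace 𝕜 V] [NormedAddCommGroup F] [NormedSpace 𝕜 F] {g : V → F} {v : V}
    (hg : Function.Periodic g v) : Function.Periodic (fderiv 𝕜 g) v := fun x => by
  rw [← fderiv_comp_add_right, hg.funext]

end Periodic

section FundamentalDomain

variable {E ι : Type*} [NormedAddCommGroup E] [NormedSpace ℝ E]
  (b : Module.Basis ι ℝ E)

theorem smul_fundamentalDomain_subset {r : ℝ} (hr : r ∈ Icc (0 : ℝ) 1) :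
    r • fundamentalDomain b ⊆ fundamentalDomain b := by
  rintro _ ⟨x, hx, rfl⟩
  rw [mem_fundamentalDomain] at hx ⊢
  intro i
  simp only [map_smul, Finsupp.smul_apply, smul_eq_mul]
  exact ⟨mul_nonneg hr.1 (hx i).1, (mul_le_of_le_one_left (hx i).1 hr.2).trans_lt (hx i).2⟩

theorem norm_le_of_mem_fundamentalDomain [Fintype ι] {x : E} (hx : x ∈ fundamentalDomain b) :
    ‖x‖ ≤ ∑ i, ‖b i‖ := by
  rw [← fract_eq_self.mpr hx]
  exact norm_fract_le b x

theorem exists_norm_sub_le_and_eq_of_periodic [Fintype ι] {α : Type*} {f : E → α}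
    (hf : ∀ i, Function.Periodic f (b i)) (x y : E) :
    ∃ x', ‖x' - y‖ ≤ ∑ i, ‖b i‖ ∧ f x' = f x := by
  refine ⟨x - floor b (x - y), ?_, ?_⟩
  · rw [sub_right_comm, ← fract_apply]
    exact norm_fract_le b _
  · exact (periodic_of_mem_span_int (forall_mem_range.mpr hf) (floor b (x - y)).2).sub_eq x

theorem setIntegral_fundamentalDomain_add_left [Finite ι] [MeasurableSpace E] [BorelSpace E]
    (μ : Measure E) [μ.IsAddLeftInvariant] {F : Type*} [NormedAddCommGroup F] [NormedSpace ℝ F]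
    {f : E → F} (hf : ∀ i, Function.Periodic f (b i)) (p : E) :
    ∫ x in fundamentalDomain b, f (p + x) ∂μ = ∫ x in fundamentalDomain b, f x ∂μ := by
  have := Fintype.ofFinite ι
  have hdom := ZSpan.isAddFundamentalDomain' b μ
  have : Countable (span ℤ (range b)).toAddSubgroup :=
    inferInstanceAs (Countable (span ℤ (range b)))
  rw [← (measurePreserving_add_left μ p).setIntegral_image_emb (measurableEmbedding_addLeft p)]
  refine (hdom.vadd_of_comm p).setIntegral_eq hdom fun v x => ?_
  rw [AddSubgroup.vadd_def, vadd_eq_add, add_comm]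
  exact periodic_of_mem_span_int (forall_mem_range.mpr hf) v.2 x

end FundamentalDomain

theorem integrableOn_of_continuous_of_isBounded {X F : Type*} [MetricSpace X] [ProperSpace X]
    [MeasurableSpace X] [OpensMeasurableSpace X] [NormedAddCommGroup F] {μ : Measure X}
    [IsFiniteMeasureOnCompacts μ] {f : X → F} {s : Set X} (hf : Continuous f)
    (hs : Bornology.IsBounded s) : IntegrableOn f s μ :=
  (hf.continuousOn.integrableOn_compact hs.isCompact_closure).mono_set subset_closure

theorem dist_measureReal_smul_setIntegral_add_le {E F : Type*} [NormedAddCommGroup E]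
    [ProperSpace E] [MeasurableSpace E] [OpensMeasurableSpace E] [NormedAddCommGroup F]
    [NormedSpace ℝ F] [CompleteSpace F] (μ : Measure E) [IsFiniteMeasureOnCompacts μ] {K : ℝ≥0}
    {g : E → F} (hg : LipschitzWith K g) {s : Set E} {R : ℝ} (hR : ∀ v ∈ s, ‖v‖ ≤ R) (x : E) :
    dist (μ.real s • g x) (∫ v in s, g (x + v) ∂μ) ≤ K * R * μ.real s := by
  have hs : Bornology.IsBounded s := isBounded_iff_forall_norm_le.mpr ⟨R, hR⟩
  have hint : IntegrableOn (fun v => g (x + v)) s μ :=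
    integrableOn_of_continuous_of_isBounded (hg.continuous.comp (continuous_const_add x)) hs
  have hconst : IntegrableOn (fun _ => g x) s μ := integrableOn_const hs.measure_lt_top.ne
  rw [← setIntegral_const, dist_eq_norm, ← integral_sub hconst hint]
  refine norm_setIntegral_le_of_norm_le_const hs.measure_lt_top fun v hv => ?_
  calc ‖g x - g (x + v)‖ ≤ K * ‖x - (x + v)‖ := hg.norm_sub_le _ _
    _ = K * ‖v‖ := by rw [sub_add_cancel_left, norm_neg]
    _ ≤ K * R := by gcongr; exact hR v hv

section TotalVariation

variable {E F : Type*} [NormedAddCommGroup E] [NormedSpace ℝ E] [MeasurableSpace E]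
  [BorelSpace E] [NormedAddCommGroup F] [NormedSpace ℝ F] [FiniteDimensional ℝ F]
  {K : ℝ≥0} {g : E → F} {s : Set E}

theorem integrableOn_fderiv_add_left [FiniteDimensional ℝ E] {μ : Measure E}
    (hg : LipschitzWith K g) (p : E) (hs : μ s ≠ ∞) :
    IntegrableOn (fun v => fderiv ℝ g (p + v)) s μ :=
  Measure.integrableOn_of_bounded hs
    ((measurable_fderiv ℝ g).comp (measurable_const_add p)).aestronglyMeasurable
    (ae_of_all _ fun _ => norm_fderiv_le_of_lipschitz ℝ hg)

theorem hasFDerivAt_setIntegral_add [FiniteDimensional ℝ E] (μ : Measure E)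
    [μ.IsAddHaarMeasure] (hg : LipschitzWith K g) (hs : Bornology.IsBounded s) (p : E) :
    HasFDerivAt (fun p => ∫ v in s, g (p + v) ∂μ) (∫ v in s, fderiv ℝ g (p + v) ∂μ) p := by
  have hcont : ∀ q, Continuous fun v => g (q + v) := fun q =>
    hg.continuous.comp (continuous_const_add q)
  have hdiff : ∀ᵐ v ∂μ.restrict s, DifferentiableAt ℝ g (p + v) :=
    ae_restrict_of_ae <| (measurePreserving_add_left μ p).quasiMeasurePreserving.ae
      hg.ae_differentiableAt
  refine (hasFDerivAt_integral_of_dominated_loc_of_lip (bound := fun _ => (K : ℝ)) univ_mem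
    (.of_forall fun q => (hcont q).aestronglyMeasurable)
    (integrableOn_of_continuous_of_isBounded (hcont p) hs)
    (integrableOn_fderiv_add_left hg p hs.measure_lt_top.ne).aestronglyMeasurable
    (ae_of_all _ fun v => ?_) (integrableOn_const hs.measure_lt_top.ne) ?_).2
  · rw [Real.nnabs_of_nonneg K.coe_nonneg, Real.toNNReal_coe]
    exact LipschitzWith.lipschitzOnWith <| .of_dist_le_mul fun q q' =>
      (hg.dist_le_mul _ _).trans_eq (by rw [dist_add_right])
  · filter_upwards [hdiff] with v hv
    exact (hasFDerivAt_comp_add_right v).mpr hv.hasFDerivAt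

variable {ι : Type*} (b : Module.Basis ι ℝ E) (μ : Measure E) [μ.IsAddHaarMeasure]

theorem norm_setIntegral_add_sub_le [Finite ι] (hg : LipschitzWith K g)
    (hper : ∀ i, Function.Periodic g (b i)) (hs : s ⊆ fundamentalDomain b) (x y : E) :
    ‖(∫ v in s, g (x + v) ∂μ) - ∫ v in s, g (y + v) ∂μ‖ ≤
      (∫ v in fundamentalDomain b, ‖fderiv ℝ g v‖ ∂μ) * ‖x - y‖ := by
  have := b.finiteDimensional_of_finite
  have hD := fundamentalDomain_isBounded b
  have hderiv : ∀ p, ‖∫ v in s, fderiv ℝ g (p + v) ∂μ‖ ≤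
      ∫ v in fundamentalDomain b, ‖fderiv ℝ g v‖ ∂μ := fun p =>
    calc ‖∫ v in s, fderiv ℝ g (p + v) ∂μ‖
        ≤ ∫ v in s, ‖fderiv ℝ g (p + v)‖ ∂μ := norm_integral_le_integral_norm _
      _ ≤ ∫ v in fundamentalDomain b, ‖fderiv ℝ g (p + v)‖ ∂μ :=
          setIntegral_mono_set (integrableOn_fderiv_add_left hg p hD.measure_lt_top.ne).norm
            (ae_of_all _ fun _ => norm_nonneg _) hs.eventuallyLE
      _ = ∫ v in fundamentalDomain b, ‖fderiv ℝ g v‖ ∂μ :=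
          setIntegral_fundamentalDomain_add_left b μ
            (fun i => (periodic_fderiv (hper i)).comp norm) p
  exact convex_univ.norm_image_sub_le_of_norm_hasFDerivWithin_le
    (fun p _ => (hasFDerivAt_setIntegral_add μ hg (hD.subset hs) p).hasFDerivWithinAt)
    (fun p _ => hderiv p) (mem_univ y) (mem_univ x)

theorem measureReal_mul_norm_sub_le [Finite ι] (hg : LipschitzWith K g)
    (hper : ∀ i, Function.Periodic g (b i)) (hs : s ⊆ fundamentalDomain b) {R : ℝ}
    (hR : ∀ v ∈ s, ‖v‖ ≤ R) (x y : E) :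
    μ.real s * (‖g x - g y‖ - 2 * K * R) ≤
      (∫ v in fundamentalDomain b, ‖fderiv ℝ g v‖ ∂μ) * ‖x - y‖ := by
  have := b.finiteDimensional_of_finite
  have htri := dist_triangle4 (μ.real s • g x) (∫ v in s, g (x + v) ∂μ)
    (∫ v in s, g (y + v) ∂μ) (μ.real s • g y)
  have hx := dist_measureReal_smul_setIntegral_add_le μ hg hR x
  have hy := dist_measureReal_smul_setIntegral_add_le μ hg hR y
  have hxy := norm_setIntegral_add_sub_le b μ hg hper hs x y
  rw [dist_smul₀, dist_eq_norm (g x), Real.norm_of_nonneg measureReal_nonneg,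
    dist_comm _ (μ.real s • g y), dist_eq_norm (∫ v in s, g (x + v) ∂μ)] at htri
  linarith

theorem measureReal_smul_fundamentalDomain_mul_norm_sub_le [Fintype ι] (hg : LipschitzWith K g)
    (hper : ∀ i, Function.Periodic g (b i)) {r : ℝ} (hr : r ∈ Icc (0 : ℝ) 1) (x y : E) :
    μ.real (r • fundamentalDomain b) * (‖g x - g y‖ - 2 * K * (r * ∑ i, ‖b i‖)) ≤
      (∫ v in fundamentalDomain b, ‖fderiv ℝ g v‖ ∂μ) * ∑ i, ‖b i‖ := by
  have hR : ∀ v ∈ r • fundamentalDomain b, ‖v‖ ≤ r * ∑ i, ‖b i‖ := by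
    rintro _ ⟨v, hv, rfl⟩
    rw [norm_smul, Real.norm_of_nonneg hr.1]
    exact mul_le_mul_of_nonneg_left (norm_le_of_mem_fundamentalDomain b hv) hr.1
  obtain ⟨x', hx', hgx⟩ := exists_norm_sub_le_and_eq_of_periodic b hper x y
  rw [← hgx]
  exact (measureReal_mul_norm_sub_le b μ hg hper (smul_fundamentalDomain_subset b hr) hR
    x' y).trans (by gcongr)

theorem measureReal_smul_fundamentalDomain_pos [Finite ι] {r : ℝ} (hr : 0 < r) :
    0 < μ.real (r • fundamentalDomain b) := by
  have := b.finiteDimensional_of_finite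
  have hD : 0 < μ.real (fundamentalDomain b) := ENNReal.toReal_pos
    (measure_fundamentalDomain_ne_zero b) (fundamentalDomain_isBounded b).measure_lt_top.ne
  rw [measureReal_def, Measure.addHaar_smul, ENNReal.toReal_mul, ← measureReal_def]
  exact mul_pos (ENNReal.toReal_pos (by simpa using (pow_pos hr _).ne') ENNReal.ofReal_ne_top) hD

theorem exists_pos_le_setIntegral_norm_fderiv [Finite ι] (F : Type*) [NormedAddCommGroup F]
    [NormedSpace ℝ F] [FiniteDimensional ℝ F] (K : ℝ≥0) {η : ℝ} (hη : 0 < η) :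
    ∃ κ > 0, ∀ g : E → F, LipschitzWith K g → (∀ i, Function.Periodic g (b i)) →
      (∃ x y, η ≤ ‖g x - g y‖) → κ ≤ ∫ x in fundamentalDomain b, ‖fderiv ℝ g x‖ ∂μ := by
  have := Fintype.ofFinite ι
  set ρ := ∑ i, ‖b i‖
  -- The scale `r` solves `2 * K * (r * ρ) = η * (1 - r) / 2`.
  set r := η / (η + 4 * K * ρ)
  have hr : 0 < r := by positivity
  have hr1 : r ≤ 1 := div_le_one_of_le₀ (le_add_of_nonneg_right (by positivity)) (by positivity)
  have hrη : 2 * K * (r * ρ) ≤ η / 2 := by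
    have : r * (η + 4 * K * ρ) = η := div_mul_cancel₀ _ (by positivity)
    linarith [mul_pos hr hη]
  have hV := measureReal_smul_fundamentalDomain_pos b μ hr
  set V := μ.real (r • fundamentalDomain b)
  refine ⟨V * (η / 2) / (1 + ρ), by positivity, fun g hg hper ⟨x, y, hxy⟩ => ?_⟩
  rw [div_le_iff₀ (by positivity)]
  calc V * (η / 2) ≤ V * (‖g x - g y‖ - 2 * K * (r * ρ)) := by gcongr; linarith
    _ ≤ (∫ x in fundamentalDomain b, ‖fderiv ℝ g x‖ ∂μ) * ρ :=
        measureReal_smul_fundamentalDomain_mul_norm_sub_le b μ hg hper ⟨hr.le, hr1⟩ x y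
    _ ≤ (∫ x in fundamentalDomain b, ‖fderiv ℝ g x‖ ∂μ) * (1 + ρ) := by
        gcongr
        linarith

end TotalVariation

section AreaIntegrand

theorem mul_sq_div_le_sqrt_sub_sqrt {a L ε : ℝ} (ha : |a| ≤ L) (hε : ε ∈ Icc (0 : ℝ) 1) :
    ε * a ^ 2 / (2 * √(1 + L ^ 2)) ≤ √(1 + a ^ 2) - √(1 + (1 - ε) ^ 2 * a ^ 2) := by
  have hgap : ε * a ^ 2 ≤ (1 + a ^ 2) - (1 + (1 - ε) ^ 2 * a ^ 2) := by
    nlinarith [mul_nonneg (mul_nonneg hε.1 (sub_nonneg.mpr hε.2)) (sq_nonneg a)]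
  have hshrink : √(1 + (1 - ε) ^ 2 * a ^ 2) ≤ √(1 + a ^ 2) :=
    Real.sqrt_le_sqrt (by linarith [mul_nonneg hε.1 (sq_nonneg a)])
  have hL : √(1 + a ^ 2) ≤ √(1 + L ^ 2) :=
    Real.sqrt_le_sqrt (by linarith [sq_le_sq' (abs_le.mp ha).1 (abs_le.mp ha).2])
  rw [div_le_iff₀ (by positivity)]
  calc ε * a ^ 2 ≤ √(1 + a ^ 2) ^ 2 - √(1 + (1 - ε) ^ 2 * a ^ 2) ^ 2 := by
        rwa [Real.sq_sqrt (by positivity), Real.sq_sqrt (by positivity)]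
    _ = (√(1 + a ^ 2) - √(1 + (1 - ε) ^ 2 * a ^ 2)) *
          (√(1 + a ^ 2) + √(1 + (1 - ε) ^ 2 * a ^ 2)) := by ring
    _ ≤ (√(1 + a ^ 2) - √(1 + (1 - ε) ^ 2 * a ^ 2)) * (2 * √(1 + L ^ 2)) :=
        mul_le_mul_of_nonneg_left (by linarith) (by linarith)

variable {α : Type*} [MeasurableSpace α] {μ : Measure α} [IsFiniteMeasure μ] {f : α → ℝ}

theorem sq_integral_div_le_integral_sq (hf : MemLp f 2 μ) :
    (∫ x, f x ∂μ) ^ 2 / μ.real univ ≤ ∫ x, f x ^ 2 ∂μ := by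
  rcases eq_zero_or_neZero μ with rfl | _
  · simp
  have hμ : 0 < μ.real univ := measureReal_univ_pos
  have hjensen := even_two.convexOn_pow.map_average_le (continuous_pow 2).continuousOn
    isClosed_univ (ae_of_all _ fun _ => mem_univ _) (hf.integrable one_le_two) hf.integrable_sq
  simp only [average_eq, smul_eq_mul] at hjensen
  field_simp at hjensen
  rw [div_le_iff₀ hμ, mul_comm]
  exact hjensen

theorem mul_sq_integral_div_le_integral_sqrt_sub_sqrt {L ε : ℝ}
    (hf : AEStronglyMeasurable f μ) (hL : ∀ x, |f x| ≤ L) (hε : ε ∈ Icc (0 : ℝ) 1) :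
    ε * ((∫ x, f x ∂μ) ^ 2 / μ.real univ) / (2 * √(1 + L ^ 2)) ≤
      ∫ x, (√(1 + f x ^ 2) - √(1 + (1 - ε) ^ 2 * f x ^ 2)) ∂μ := by
  have hL2 : MemLp f 2 μ := .of_bound hf L (ae_of_all _ hL)
  have hsqrt : ∀ c : ℝ, Integrable (fun x => √(1 + c ^ 2 * f x ^ 2)) μ := fun c => by
    refine .of_bound (by fun_prop) (√(1 + c ^ 2 * L ^ 2)) (ae_of_all _ fun x => ?_)
    rw [Real.norm_of_nonneg (Real.sqrt_nonneg _), ← sq_abs (f x)]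
    gcongr
    exact hL x
  calc ε * ((∫ x, f x ∂μ) ^ 2 / μ.real univ) / (2 * √(1 + L ^ 2))
      ≤ ε * (∫ x, f x ^ 2 ∂μ) / (2 * √(1 + L ^ 2)) := by
        gcongr
        · exact hε.1
        · exact sq_integral_div_le_integral_sq hL2
    _ = ∫ x, ε * f x ^ 2 / (2 * √(1 + L ^ 2)) ∂μ := by
        rw [integral_div, integral_const_mul]
    _ ≤ ∫ x, (√(1 + f x ^ 2) - √(1 + (1 - ε) ^ 2 * f x ^ 2)) ∂μ :=
        integral_mono ((hL2.integrable_sq.const_mul ε).div_const _)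
          (by simpa [Pi.sub_def] using (hsqrt 1).sub (hsqrt (1 - ε)))
          fun x => mul_sq_div_le_sqrt_sub_sqrt (hL x) hε

end AreaIntegrand

theorem exists_lt_sub_of_lt_iSup_sub_iInf {α : Type*} [Nonempty α] {f : α → ℝ} {η : ℝ}
    (hη : η < (⨆ x, f x) - ⨅ x, f x) : ∃ x y, η < f x - f y := by
  by_contra! hle
  have hsup : ⨆ x, f x ≤ η + ⨅ y, f y := ciSup_le fun x => by
    have : f x - η ≤ ⨅ y, f y := le_ciInf fun y => by linarith [hle x y]
    linarith
  linarith

theorem euclidean_perimeter_assumptionH_general {E ι : Type*} [NormedAddCommGroup E]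
    [NormedSpace ℝ E] [MeasurableSpace E] [BorelSpace E] [Finite ι] (b : Module.Basis ι ℝ E)
    (μ : Measure E) [μ.IsAddHaarMeasure] (K : ℝ≥0) {δ : ℝ} (hδ : 0 < δ) :
    ∃ C > 0, ∀ g : E → ℝ, LipschitzWith K g → (∀ i, Function.Periodic g (b i)) →
      δ ≤ (⨆ x, g x) - (⨅ x, g x) → ∀ ε ∈ Icc (0 : ℝ) 1,
        C * ε ≤ ∫ x in fundamentalDomain b,
          (√(1 + ‖fderiv ℝ g x‖ ^ 2) - √(1 + (1 - ε) ^ 2 * ‖fderiv ℝ g x‖ ^ 2)) ∂μ := by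
  have := b.finiteDimensional_of_finite
  obtain ⟨κ, hκ, hvar⟩ := exists_pos_le_setIntegral_norm_fderiv b μ ℝ K (half_pos hδ)
  have hfin := (fundamentalDomain_isBounded b).measure_lt_top (μ := μ)
  have : IsFiniteMeasure (μ.restrict (fundamentalDomain b)) := isFiniteMeasure_restrict.mpr hfin.ne
  have hD : 0 < μ.real (fundamentalDomain b) := by
    simpa using measureReal_smul_fundamentalDomain_pos b μ one_pos
  refine ⟨κ ^ 2 / μ.real (fundamentalDomain b) / (2 * √(1 + K ^ 2)), by positivity,
    fun g hg hper hosc ε hε => ?_⟩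
  obtain ⟨x, y, hxy⟩ := exists_lt_sub_of_lt_iSup_sub_iInf ((half_lt_self hδ).trans_le hosc)
  have hTV := hvar g hg hper ⟨x, y, hxy.le.trans (le_abs_self _)⟩
  have hgain := mul_sq_integral_div_le_integral_sqrt_sub_sqrt
    (μ := μ.restrict (fundamentalDomain b))
    (measurable_fderiv ℝ g).norm.aestronglyMeasurable
    (fun x => (abs_norm _).trans_le (norm_fderiv_le_of_lipschitz ℝ hg)) hε
  rw [measureReal_restrict_apply_univ] at hgain
  refine le_trans ?_ hgain
  rw [div_mul_eq_mul_div, mul_comm]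
  have hε0 := hε.1
  gcongr

theorem cube_eq_fundamentalDomain (m : ℕ) :
    cube m = fundamentalDomain (EuclideanSpace.basisFun (Fin m) ℝ).toBasis := by
  ext x
  simp [cube, mem_fundamentalDomain]

/-- The Euclidean perimeter of periodic Lipschitz subgraphs satisfies assumption (H):
shrinking the graph vertically by a factor `1-ε` decreases the area integrand by at
least `C ε`, provided the oscillation is at least `δ`. -/
theorem euclidean_perimeter_assumptionH (d : ℕ) (hd : 2 ≤ d) (L δ : ℝ)
    (hL : 0 < L) (hδ : 0 < δ) :
    ∃ C : ℝ, 0 < C ∧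
      ∀ g : Rm (d-1) → ℝ, LipschitzWith (Real.toNNReal L) g →
        (∀ (x : Rm (d-1)) (z : Fin (d-1) → ℤ),
          g (x + (show Rm (d-1) from WithLp.toLp 2 fun i => (z i : ℝ))) = g x) →
        δ ≤ (⨆ x, g x) - (⨅ x, g x) →
        ∀ ε : ℝ, 0 < ε → ε < 1 →
          C * ε ≤ ∫ x in cube (d-1),
            (Real.sqrt (1 + ‖fderiv ℝ g x‖ ^ 2)
              - Real.sqrt (1 + (1 - ε) ^ 2 * ‖fderiv ℝ g x‖ ^ 2)) := by
  obtain ⟨C, hC, hgain⟩ := euclidean_perimeter_assumptionH_general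
    (EuclideanSpace.basisFun (Fin (d - 1)) ℝ).toBasis volume L.toNNReal hδ
  refine ⟨C, hC, fun g hg hper hosc ε hε hε1 => ?_⟩
  have hperiodic (i : Fin (d - 1)) :
      Function.Periodic g ((EuclideanSpace.basisFun (Fin (d - 1)) ℝ).toBasis i) := fun x => by
    convert hper x (Pi.single i 1)
    ext j
    simp [Pi.single_apply]
  rw [cube_eq_fundamentalDomain]
  exact hgain g hg hperiodic hosc ε ⟨hε.le, hε1.le⟩
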